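/- Let g ∈ H^∞, 0 < p < ∞, and let J be an inner function such that J·H^p is contained in the H^p-closure of ℂ[B,g]. Then for every a ∈ 𝔻 with Γ(g)(a) = 0 one has J(a) = 0. -/

import Mathlib

open Complex Polynomial MeasureTheory Metric Set Filter Topology
open scoped Classical

noncomputable section

/-- The open unit disk in `ℂ`. -/
def uDisk : Set ℂ := Metric.ball 0 1

/-- The closed unit disk in `ℂ`. -/
def cDisk : Set ℂ := Metric.closedBall 0 1

/-- The finite Blaschke product with zero set `a 0, …, a (n-1)`:
`B(z) = ∏_j (a_j - z)/(1 - conj(a_j)·z)`. -/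
def blaschke {n : ℕ} (a : Fin n → ℂ) (z : ℂ) : ℂ :=
  ∏ j, (a j - z) / (1 - (starRingEnd ℂ) (a j) * z)

/-- The multiset of the `n` solutions (with multiplicity) `φ_0(z) = z, φ_1(z), …, φ_{n-1}(z)`
of `B(w) = B(z)`, realized as the roots of the polynomial equation
`∏_j (a_j - w) = B(z) · ∏_j (1 - conj(a_j)·w)`. -/
def fiberMS {n : ℕ} (a : Fin n → ℂ) (z : ℂ) : Multiset ℂ :=
  ((∏ j, (Polynomial.C (a j) - Polynomial.X)) -
    Polynomial.C (blaschke a z) *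
      ∏ j, (1 - Polynomial.C ((starRingEnd ℂ) (a j)) * Polynomial.X)).roots

/-- `𝒟(f)(z) = ∏_{j=1}^{n-1} (f(z) - f(φ_j(z)))`, where `φ_1(z), …, φ_{n-1}(z)` is the
fiber of `B` over `B(z)` with one copy of `z` removed.  In particular
`calD a id z = ∏_{j=1}^{n-1} (z - φ_j(z))`. -/
def calD {n : ℕ} (a : Fin n → ℂ) (f : ℂ → ℂ) (z : ℂ) : ℂ :=
  (((fiberMS a z).erase z).map (fun w => f z - f w)).prod

/-- `G` is (the holomorphic extension after removing singularities of) `Γ(f) = 𝒟(f)/𝒟`. -/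
def IsGamma {n : ℕ} (a : Fin n → ℂ) (f G : ℂ → ℂ) : Prop :=
  DifferentiableOn ℂ G uDisk ∧ ∀ z ∈ uDisk, G z * calD a id z = calD a f z

/-- `p`-th power integral mean of `f` on the circle of radius `r`. -/
def circMean (p : ℝ) (f : ℂ → ℂ) (r : ℝ) : ℝ :=
  ∫ θ in (0:ℝ)..(2 * Real.pi), ‖f ((r : ℂ) * Complex.exp ((θ : ℂ) * Complex.I))‖ ^ p

/-- The `H^p` norm of `f` (for `0 < p < ∞`). -/
def hpNorm (p : ℝ) (f : ℂ → ℂ) : ℝ :=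
  (sSup {m : ℝ | ∃ r ∈ Set.Ico (0:ℝ) 1, m = circMean p f r}) ^ (1 / p)

/-- Membership in the Hardy space `H^p`, `0 < p < ∞`: holomorphic on the disk with
uniformly bounded integral means. -/
def MemHp (p : ℝ) (f : ℂ → ℂ) : Prop :=
  DifferentiableOn ℂ f uDisk ∧ ∃ C : ℝ, ∀ r ∈ Set.Ico (0:ℝ) 1, circMean p f r ≤ C

/-- Membership in `H^∞`: bounded holomorphic functions on the disk. -/
def MemHinf (f : ℂ → ℂ) : Prop :=
  DifferentiableOn ℂ f uDisk ∧ ∃ C : ℝ, ∀ z ∈ uDisk, ‖f z‖ ≤ C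

/-- The `H^∞` (sup) norm. -/
def hinfNorm (f : ℂ → ℂ) : ℝ := sSup {m : ℝ | ∃ z ∈ uDisk, m = ‖f z‖}

/-- The algebra of all polynomials in the functions `F 0, …, F (m-1)`. -/
def algGen (m : ℕ) (F : Fin m → (ℂ → ℂ)) : Set (ℂ → ℂ) :=
  {h | ∃ P : MvPolynomial (Fin m) ℂ, ∀ z : ℂ, h z = MvPolynomial.eval (fun i => F i z) P}

/-- The algebra `ℂ[F,G]` of all polynomials in the two functions `F` and `G`. -/
def algGen2 (F G : ℂ → ℂ) : Set (ℂ → ℂ) := algGen 2 ![F, G]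

/-- The (sequential) closure of `S` in `H^p`. -/
def hpClosure (p : ℝ) (S : Set (ℂ → ℂ)) : Set (ℂ → ℂ) :=
  {f | MemHp p f ∧ ∃ u : ℕ → (ℂ → ℂ), (∀ k, u k ∈ S) ∧
    Filter.Tendsto (fun k => hpNorm p (fun z => f z - u k z)) Filter.atTop (nhds 0)}

/-- `S` has finite codimension in `H^p`: finitely many functions in `H^p` together with `S`
span all of `H^p`. -/
def FiniteCodimHp (p : ℝ) (S : Set (ℂ → ℂ)) : Prop :=
  ∃ (k : ℕ) (e : Fin k → (ℂ → ℂ)), (∀ i, MemHp p (e i)) ∧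
    ∀ f, MemHp p f → ∃ (c : Fin k → ℂ) (s : ℂ → ℂ), s ∈ S ∧
      ∀ z ∈ uDisk, f z = s z + ∑ i, c i * e i z

/-- Inner function: bounded by 1, holomorphic, radial limits of modulus 1 a.e. -/
def IsInner (f : ℂ → ℂ) : Prop :=
  DifferentiableOn ℂ f uDisk ∧ (∀ z ∈ uDisk, ‖f z‖ ≤ 1) ∧
  ∀ᵐ θ : ℝ ∂volume, ∃ l : ℂ, ‖l‖ = 1 ∧
    Filter.Tendsto (fun r : ℝ => f ((r : ℂ) * Complex.exp ((θ : ℂ) * Complex.I)))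
      (nhdsWithin 1 (Set.Iio 1)) (nhds l)

/-- `J` divides `h`, with a quotient holomorphic on the disk. -/
def InnerDivides (J h : ℂ → ℂ) : Prop :=
  ∃ k : ℂ → ℂ, DifferentiableOn ℂ k uDisk ∧ ∀ z ∈ uDisk, h z = J z * k z

/-- Outer function: a holomorphic function on the disk whose only inner divisors are
unimodular constants (i.e. whose inner part is a unimodular constant). -/
def IsOuter (h : ℂ → ℂ) : Prop :=
  DifferentiableOn ℂ h uDisk ∧
  ∀ J : ℂ → ℂ, IsInner J → InnerDivides J h →
    ∃ c : ℂ, ‖c‖ = 1 ∧ ∀ z ∈ uDisk, J z = c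

/-- `I` is the inner part of `h`: `I` is inner and `h = I·F` with `F` outer. -/
def IsInnerPartOf (I h : ℂ → ℂ) : Prop :=
  IsInner I ∧ ∃ F : ℂ → ℂ, IsOuter F ∧ ∀ z ∈ uDisk, h z = I z * F z

/-- Finite Blaschke product (up to a unimodular constant factor). -/
def IsFiniteBlaschke (f : ℂ → ℂ) : Prop :=
  ∃ (m : ℕ) (c : ℂ) (b : Fin m → ℂ), ‖c‖ = 1 ∧ (∀ i, b i ∈ uDisk) ∧
    ∀ z ∈ uDisk, f z = c * ∏ i, (b i - z) / (1 - (starRingEnd ℂ) (b i) * z)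

/-- `h` has no singular inner factor: every zero-free inner divisor of `h` is a
unimodular constant. -/
def NoSingularInnerFactor (h : ℂ → ℂ) : Prop :=
  ∀ J : ℂ → ℂ, IsInner J → (∀ z ∈ uDisk, J z ≠ 0) → InnerDivides J h →
    ∃ c : ℂ, ‖c‖ = 1 ∧ ∀ z ∈ uDisk, J z = c

/-!
Suppose `J w₀ ≠ 0`. Subharmonicity of `|f|^p` makes `H^p`-convergence locally uniform on the disk,
so every relation `u w = u w₀` or `u' w₀ = 0` valid on `ℂ[B,g]` persists on its `H^p`-closure.
The functions `J` and `zJ` of that closure do not both satisfy such a relation. Hence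
`g w ≠ g w₀` at every other point `w` of the fiber of `B` through `w₀`, and `B'`, `g'` do not
both vanish at `w₀`. By compactness of the closed disk, `|z - w| ≤ M |g z - g w|` for all `z` near
`w₀` and all `w` with `B w = B z`. Multiplying over the fiber bounds `∏ (z - φ_j z)` by a constant
times `∏ (g z - g (φ_j z)) = Γ(g)(z) ∏ (z - φ_j z)`. Since `∏ (z - φ_j z)` vanishes only at the
critical points of `B`, which are isolated, `Γ(g)` is bounded away from `0` near `w₀`.
-/

/-! ### Point evaluations on `H^p` -/

section SubMeanValue

variable {f : ℂ → ℂ} {c : ℂ} {R p : ℝ}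

/-- In Jensen's formula the zeros of `f` contribute nonnegatively. -/
lemma log_norm_le_circleAverage (hR : 0 < R) (hf : AnalyticOnNhd ℂ f (closedBall c R))
    (hc : f c ≠ 0) :
    Real.log ‖f c‖ ≤ Real.circleAverage (fun z => Real.log ‖f z‖) c R := by
  rw [← abs_of_pos hR] at hf
  rw [AnalyticOnNhd.circleAverage_log_norm hR.ne' hf hc]
  refine le_add_of_nonneg_left (finsum_nonneg fun u => ?_)
  by_cases hu : u ∈ closedBall c |R|
  · refine mul_nonneg (mod_cast MeromorphicOn.AnalyticOnNhd.divisor_nonneg hf u) ?_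
    rcases eq_or_ne c u with rfl | hcu
    · simp
    · have hdist : ‖c - u‖ ≤ R := by simpa [abs_of_pos hR, dist_eq_norm, norm_sub_rev] using hu
      have hpos : 0 < ‖c - u‖ := norm_pos_iff.2 (sub_ne_zero.2 hcu)
      exact Real.log_nonneg (by rwa [← div_eq_mul_inv, one_le_div hpos])
  · simp [Function.locallyFinsuppWithin.apply_eq_zero_of_notMem _ hu]

/-- `exp (p * log 0) = 1` differs from `0 ^ p = 0`, but the zeros of `f` are isolated. -/
lemma rpow_norm_eventuallyEq_exp_log (hf : AnalyticOnNhd ℂ f (closedBall c R)) (hR : 0 ≤ R)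
    (hc : f c ≠ 0) :
    (fun z => ‖f z‖ ^ p) =ᶠ[codiscreteWithin (sphere c R)]
      fun z => Real.exp (p * Real.log ‖f z‖) := by
  have hcR : c ∈ closedBall c R := mem_closedBall_self hR
  have hne := hf.preimage_zero_mem_codiscreteWithin hc hcR
    ⟨⟨c, hcR⟩, (convex_closedBall c R).isPreconnected⟩
  filter_upwards [codiscreteWithin_mono sphere_subset_closedBall hne] with z hz
  rw [Real.rpow_def_of_pos (norm_pos_iff.2 (by simpa using hz)), mul_comm]

lemma exp_mul_circleAverage_le {u : ℂ → ℝ} (p : ℝ) (hu : CircleIntegrable u c R)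
    (hexp : CircleIntegrable (fun z => Real.exp (p * u z)) c R) :
    Real.exp (p * Real.circleAverage u c R) ≤
      Real.circleAverage (fun z => Real.exp (p * u z)) c R := by
  have hπ : (0 : ℝ) < 2 * Real.pi := Real.two_pi_pos
  have : NeZero (volume.restrict (Ioc (0 : ℝ) (2 * Real.pi))) := ⟨by simp [Real.pi_pos]⟩
  have hconv : ConvexOn ℝ univ fun x : ℝ => Real.exp (p * x) :=
    convexOn_exp.comp_linearMap (LinearMap.mul ℝ ℝ p)
  simp only [Real.circleAverage_eq_intervalAverage, uIoc_of_le hπ.le]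
  exact hconv.map_average_le (by fun_prop) isClosed_univ (by simp)
    ((intervalIntegrable_iff_integrableOn_Ioc_of_le hπ.le).1 hu)
    ((intervalIntegrable_iff_integrableOn_Ioc_of_le hπ.le).1 hexp)

lemma rpow_norm_le_circleAverage (hR : 0 < R) (hp : 0 < p)
    (hf : AnalyticOnNhd ℂ f (closedBall c R)) :
    ‖f c‖ ^ p ≤ Real.circleAverage (fun z => ‖f z‖ ^ p) c R := by
  by_cases hc : f c = 0
  · rw [hc, norm_zero, Real.zero_rpow hp.ne']
    exact Real.circleAverage_nonneg_of_nonneg fun _ _ => by positivity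
  have hlog : CircleIntegrable (fun z => Real.log ‖f z‖) c R :=
    MeromorphicOn.circleIntegrable_log_norm fun z hz =>
      (hf z (sphere_subset_closedBall (by rwa [abs_of_pos hR] at hz))).meromorphicAt
  have hrpow : CircleIntegrable (fun z => ‖f z‖ ^ p) c R :=
    ((hf.continuousOn.mono sphere_subset_closedBall).norm.rpow_const
      fun _ _ => Or.inr hp.le).circleIntegrable hR.le
  have heq := rpow_norm_eventuallyEq_exp_log (p := p) hf hR.le hc
  rw [← abs_of_pos hR] at heq
  calc ‖f c‖ ^ p = Real.exp (p * Real.log ‖f c‖) := by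
        rw [Real.rpow_def_of_pos (norm_pos_iff.2 hc), mul_comm]
    _ ≤ Real.exp (p * Real.circleAverage (fun z => Real.log ‖f z‖) c R) := by
        gcongr
        exact log_norm_le_circleAverage hR hf hc
    _ ≤ Real.circleAverage (fun z => Real.exp (p * Real.log ‖f z‖)) c R :=
        exp_mul_circleAverage_le p hlog (hrpow.congr_codiscreteWithin heq)
    _ = Real.circleAverage (fun z => ‖f z‖ ^ p) c R :=
        (Real.circleAverage_congr_codiscreteWithin heq hR.ne').symm

end SubMeanValue

section PolarCoordinates

variable {c : ℂ} {R : ℝ}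

lemma lintegral_eq_lintegral_circleMap {F : ℂ → ENNReal} (hF : Measurable F) (c : ℂ) :
    ∫⁻ z, F z = ∫⁻ r in Ioi (0 : ℝ), ENNReal.ofReal r *
      ∫⁻ θ in Ioo (-Real.pi) Real.pi, F (circleMap c r θ) := by
  have hcirc : Measurable fun q : ℝ × ℝ => circleMap c q.1 q.2 := by
    unfold circleMap
    fun_prop
  have hpolar (q : ℝ × ℝ) : c + Complex.polarCoord.symm q = circleMap c q.1 q.2 := by
    simp [circleMap, Complex.exp_mul_I]
  rw [← lintegral_add_left_eq_self F c,
    ← Complex.lintegral_comp_polarCoord_symm fun z => F (c + z), polarCoord_target,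
    Measure.volume_eq_prod, ← Measure.prod_restrict]
  simp only [hpolar, smul_eq_mul]
  rw [lintegral_prod _ (by fun_prop)]
  exact lintegral_congr fun r =>
    lintegral_const_mul (ENNReal.ofReal r) (hF.comp (hcirc.comp measurable_prodMk_left))

lemma lintegral_ofReal_circleMap {φ : ℂ → ℝ} (hR : 0 ≤ R) (hφ : ContinuousOn φ (sphere c R))
    (hφ0 : 0 ≤ φ) :
    ∫⁻ θ in Ioo (-Real.pi) Real.pi, ENNReal.ofReal (φ (circleMap c R θ)) =
      ENNReal.ofReal (2 * Real.pi * Real.circleAverage φ c R) := by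
  have hcont : Continuous fun θ : ℝ => φ (circleMap c R θ) :=
    hφ.comp_continuous (continuous_circleMap c R) fun θ => circleMap_mem_sphere c hR θ
  have haverage : 2 * Real.pi * Real.circleAverage φ c R =
      ∫ θ in (-Real.pi)..Real.pi, φ (circleMap c R θ) := by
    rw [Real.circleAverage_eq_integral_add (-Real.pi),
      intervalIntegral.integral_comp_add_right (fun θ => φ (circleMap c R θ)), smul_eq_mul,
      mul_inv_cancel_left₀ Real.two_pi_pos.ne']
    ring_nf
  rw [haverage, intervalIntegral.integral_of_le (by linarith [Real.pi_pos]),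
    ofReal_integral_eq_lintegral_ofReal (hcont.intervalIntegrable _ _).1
      (Eventually.of_forall fun _ => hφ0 _),
    setLIntegral_congr Ioo_ae_eq_Ioc]

lemma lintegral_ball_eq_lintegral_circleAverage {φ : ℂ → ℝ} (hφ : ContinuousOn φ (ball c R))
    (hφ0 : 0 ≤ φ) :
    ∫⁻ z in ball c R, ENNReal.ofReal (φ z) =
      ∫⁻ r in Ioo 0 R, ENNReal.ofReal (r * (2 * Real.pi * Real.circleAverage φ c r)) := by
  have hmeas : Measurable ((ball c R).indicator fun z => ENNReal.ofReal (φ z)) :=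
    (ENNReal.continuous_ofReal.comp_continuousOn hφ).measurable_piecewise continuousOn_const
      measurableSet_ball
  rw [← lintegral_indicator measurableSet_ball, lintegral_eq_lintegral_circleMap hmeas c,
    ← Iio_inter_Ioi (b := (0 : ℝ)), ← setLIntegral_indicator measurableSet_Iio]
  refine setLIntegral_congr_fun measurableSet_Ioi fun r (hr : 0 < r) => ?_
  by_cases hrR : r < R
  · have hmem (θ : ℝ) : circleMap c r θ ∈ ball c R :=
      sphere_subset_ball hrR (circleMap_mem_sphere c hr.le θ)
    simp only [hmem, indicator_of_mem, indicator_of_mem (mem_Iio.2 hrR)]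
    rw [lintegral_ofReal_circleMap hr.le (hφ.mono (sphere_subset_ball hrR)) hφ0,
      ENNReal.ofReal_mul hr.le]
  · have hmem (θ : ℝ) : circleMap c r θ ∉ ball c R := by
      rw [mem_ball, mem_sphere.1 (circleMap_mem_sphere c hr.le θ)]
      exact hrR
    simp [hmem, hrR]

end PolarCoordinates

lemma ofReal_mul_rpow_norm_le_lintegral_ball {f : ℂ → ℂ} {c : ℂ} {R p : ℝ} (hR : 0 ≤ R)
    (hp : 0 < p) (hf : DifferentiableOn ℂ f (ball c R)) :
    ENNReal.ofReal (Real.pi * R ^ 2 * ‖f c‖ ^ p) ≤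
      ∫⁻ z in ball c R, ENNReal.ofReal (‖f z‖ ^ p) := by
  rw [lintegral_ball_eq_lintegral_circleAverage
    (hf.continuousOn.norm.rpow_const fun _ _ => Or.inr hp.le) fun _ => by positivity]
  calc ENNReal.ofReal (Real.pi * R ^ 2 * ‖f c‖ ^ p)
      = ENNReal.ofReal (∫ r in (0 : ℝ)..R, r * (2 * Real.pi * ‖f c‖ ^ p)) := by
        rw [intervalIntegral.integral_mul_const, integral_id]
        ring_nf
    _ = ∫⁻ r in Ioo 0 R, ENNReal.ofReal (r * (2 * Real.pi * ‖f c‖ ^ p)) := by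
        rw [intervalIntegral.integral_of_le hR, setLIntegral_congr Ioo_ae_eq_Ioc,
          ofReal_integral_eq_lintegral_ofReal]
        · exact ((continuous_mul_const _).intervalIntegrable _ _).1
        · filter_upwards [ae_restrict_mem measurableSet_Ioc] with r hr
          exact mul_nonneg hr.1.le (by positivity)
    _ ≤ _ := setLIntegral_mono' measurableSet_Ioo fun r ⟨hr0, hrR⟩ => by
        gcongr
        exact rpow_norm_le_circleAverage hr0 hp
          ((hf.analyticOnNhd isOpen_ball).mono (closedBall_subset_ball hrR))

section Hardy

variable {f g : ℂ → ℂ} {p : ℝ}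

lemma isOpen_uDisk : IsOpen uDisk := isOpen_ball

lemma circMean_eq_circleAverage (p : ℝ) (f : ℂ → ℂ) (r : ℝ) :
    circMean p f r = 2 * Real.pi * Real.circleAverage (fun z => ‖f z‖ ^ p) 0 r := by
  rw [Real.circleAverage_def, smul_eq_mul, mul_inv_cancel_left₀ Real.two_pi_pos.ne']
  simp [circMean, circleMap]

lemma circMean_nonneg (p : ℝ) (f : ℂ → ℂ) (r : ℝ) : 0 ≤ circMean p f r :=
  intervalIntegral.integral_nonneg Real.two_pi_pos.le fun _ _ => by positivity

lemma lintegral_uDisk_rpow_norm_le {M : ℝ} (hf : ContinuousOn f uDisk) (hp : 0 < p)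
    (hM : ∀ r ∈ Ico (0 : ℝ) 1, circMean p f r ≤ M) :
    ∫⁻ z in uDisk, ENNReal.ofReal (‖f z‖ ^ p) ≤ ENNReal.ofReal M := by
  rw [uDisk, lintegral_ball_eq_lintegral_circleAverage
    (hf.norm.rpow_const fun _ _ => Or.inr hp.le) fun _ => by positivity]
  calc _ ≤ ∫⁻ _ in Ioo (0 : ℝ) 1, ENNReal.ofReal M := by
        refine setLIntegral_mono' measurableSet_Ioo fun r ⟨hr0, hr1⟩ => ?_
        rw [← circMean_eq_circleAverage]
        gcongr
        exact (mul_le_of_le_one_left (circMean_nonneg p f r) hr1.le).trans (hM r ⟨hr0.le, hr1⟩)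
    _ = ENNReal.ofReal M := by simp

lemma mul_rpow_norm_le_of_circMean_le {M ρ : ℝ} {w : ℂ} (hf : DifferentiableOn ℂ f uDisk)
    (hp : 0 < p) (hM : ∀ r ∈ Ico (0 : ℝ) 1, circMean p f r ≤ M) (hρ : 0 ≤ ρ)
    (hw : ‖w‖ + ρ ≤ 1) :
    Real.pi * ρ ^ 2 * ‖f w‖ ^ p ≤ M := by
  have hsub : ball w ρ ⊆ uDisk := ball_subset_ball' (by simpa [add_comm] using hw)
  have hM0 : 0 ≤ M := (circMean_nonneg p f 0).trans (hM 0 (by simp))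
  refine (ENNReal.ofReal_le_ofReal_iff hM0).1 ?_
  calc _ ≤ ∫⁻ z in ball w ρ, ENNReal.ofReal (‖f z‖ ^ p) :=
        ofReal_mul_rpow_norm_le_lintegral_ball hρ hp (hf.mono hsub)
    _ ≤ ∫⁻ z in uDisk, ENNReal.ofReal (‖f z‖ ^ p) := lintegral_mono_set hsub
    _ ≤ ENNReal.ofReal M := lintegral_uDisk_rpow_norm_le hf.continuousOn hp hM

lemma MemHp.mul_norm_le_hpNorm {ρ : ℝ} {w : ℂ} (hf : MemHp p f) (hp : 0 < p) (hρ : 0 ≤ ρ)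
    (hw : ‖w‖ + ρ ≤ 1) :
    (Real.pi * ρ ^ 2) ^ (1 / p) * ‖f w‖ ≤ hpNorm p f := by
  obtain ⟨hd, M, hM⟩ := hf
  have hbdd : BddAbove {m : ℝ | ∃ r ∈ Ico (0 : ℝ) 1, m = circMean p f r} := by
    refine ⟨M, ?_⟩
    rintro m ⟨r, hr, rfl⟩
    exact hM r hr
  have hle := mul_rpow_norm_le_of_circMean_le hd hp (fun r hr => le_csSup hbdd ⟨r, hr, rfl⟩) hρ hw
  calc (Real.pi * ρ ^ 2) ^ (1 / p) * ‖f w‖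
      = (Real.pi * ρ ^ 2 * ‖f w‖ ^ p) ^ (1 / p) := by
        rw [Real.mul_rpow (x := Real.pi * ρ ^ 2) (by positivity) (by positivity),
          ← Real.rpow_mul (norm_nonneg _), mul_one_div_cancel hp.ne', Real.rpow_one]
    _ ≤ hpNorm p f := Real.rpow_le_rpow (by positivity) hle (by positivity)

lemma circleIntegrable_rpow_norm {r : ℝ} (hf : ContinuousOn f uDisk) (hp : 0 ≤ p)
    (hr : r ∈ Ico (0 : ℝ) 1) : CircleIntegrable (fun z => ‖f z‖ ^ p) 0 r :=
  ((hf.mono (sphere_subset_ball hr.2)).norm.rpow_const fun _ _ => Or.inr hp).circleIntegrable hr.1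

lemma MemHinf.memHp (hf : MemHinf f) (hp : 0 ≤ p) : MemHp p f := by
  obtain ⟨hd, K, hK⟩ := hf
  refine ⟨hd, 2 * Real.pi * K ^ p, fun r hr => ?_⟩
  rw [circMean_eq_circleAverage]
  gcongr
  refine Real.circleAverage_mono_on_of_le_circle
    (circleIntegrable_rpow_norm hd.continuousOn hp hr) fun z hz => ?_
  rw [abs_of_nonneg hr.1] at hz
  exact Real.rpow_le_rpow (norm_nonneg _) (hK z (sphere_subset_ball hr.2 hz)) hp

lemma add_rpow_le_two_rpow_mul_add {x y : ℝ} (hx : 0 ≤ x) (hy : 0 ≤ y) (hp : 0 ≤ p) :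
    (x + y) ^ p ≤ 2 ^ p * (x ^ p + y ^ p) := by
  lift x to NNReal using hx
  lift y to NNReal using hy
  have := ENNReal.add_rpow_le_two_rpow_mul_rpow_add_rpow x y hp
  rw [← ENNReal.coe_ofNat] at this
  simp only [← ENNReal.coe_add, ← ENNReal.coe_rpow_of_nonneg _ hp, ← ENNReal.coe_mul,
    ENNReal.coe_le_coe] at this
  exact_mod_cast this

lemma MemHp.sub (hf : MemHp p f) (hg : MemHp p g) (hp : 0 ≤ p) :
    MemHp p fun z => f z - g z := by
  obtain ⟨hfd, K, hK⟩ := hf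
  obtain ⟨hgd, L, hL⟩ := hg
  refine ⟨hfd.sub hgd, 2 ^ p * (K + L), fun r hr => ?_⟩
  have hfi := circleIntegrable_rpow_norm hfd.continuousOn hp hr
  have hgi := circleIntegrable_rpow_norm hgd.continuousOn hp hr
  have hpointwise (z : ℂ) : ‖f z - g z‖ ^ p ≤ (2 : ℝ) ^ p • (‖f z‖ ^ p + ‖g z‖ ^ p) :=
    (Real.rpow_le_rpow (norm_nonneg _) (norm_sub_le _ _) hp).trans
      (add_rpow_le_two_rpow_mul_add (norm_nonneg _) (norm_nonneg _) hp)
  have haverage : Real.circleAverage (fun z => ‖f z - g z‖ ^ p) 0 r ≤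
      2 ^ p * (Real.circleAverage (fun z => ‖f z‖ ^ p) 0 r +
        Real.circleAverage (fun z => ‖g z‖ ^ p) 0 r) := by
    rw [← Real.circleAverage_fun_add hfi hgi, ← smul_eq_mul, ← Real.circleAverage_fun_smul]
    exact Real.circleAverage_mono (circleIntegrable_rpow_norm (hfd.sub hgd).continuousOn hp hr)
      ((hfi.add hgi).const_fun_smul) fun z _ => hpointwise z
  have hfK := hK r hr
  have hgL := hL r hr
  rw [circMean_eq_circleAverage] at hfK hgL ⊢
  calc _ ≤ 2 * Real.pi * (2 ^ p * (Real.circleAverage (fun z => ‖f z‖ ^ p) 0 r +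
        Real.circleAverage (fun z => ‖g z‖ ^ p) 0 r)) := by gcongr
    _ = 2 ^ p * (2 * Real.pi * Real.circleAverage (fun z => ‖f z‖ ^ p) 0 r +
        2 * Real.pi * Real.circleAverage (fun z => ‖g z‖ ^ p) 0 r) := by ring
    _ ≤ 2 ^ p * (K + L) := by gcongr

lemma tendstoLocallyUniformlyOn_of_tendsto_hpNorm {u : ℕ → ℂ → ℂ} (hp : 0 < p)
    (hsub : ∀ k, MemHp p fun z => f z - u k z)
    (hlim : Tendsto (fun k => hpNorm p fun z => f z - u k z) atTop (𝓝 0)) :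
    TendstoLocallyUniformlyOn u f atTop uDisk := by
  rw [Metric.tendstoLocallyUniformlyOn_iff]
  intro ε hε x hx
  obtain ⟨s, hxs, hs⟩ := exists_between (mem_ball_zero_iff.1 hx)
  have hconst : 0 < (Real.pi * (1 - s) ^ 2) ^ (1 / p) := by
    have := sub_pos.2 hs
    positivity
  refine ⟨ball 0 s, mem_nhdsWithin_of_mem_nhds (isOpen_ball.mem_nhds (by simpa using hxs)), ?_⟩
  filter_upwards [hlim.eventually (gt_mem_nhds (mul_pos hconst hε))] with k hk y hy
  rw [mem_ball_zero_iff] at hy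
  rw [dist_eq_norm]
  exact lt_of_mul_lt_mul_left
    (((hsub k).mul_norm_le_hpNorm hp (sub_nonneg.2 hs.le) (by linarith)).trans_lt hk) hconst.le

lemma exists_tendstoLocallyUniformlyOn_of_mem_hpClosure {S : Set (ℂ → ℂ)} (hp : 0 < p)
    (hS : ∀ u ∈ S, MemHp p u) (hf : f ∈ hpClosure p S) :
    ∃ u : ℕ → ℂ → ℂ, (∀ k, u k ∈ S) ∧ TendstoLocallyUniformlyOn u f atTop uDisk := by
  obtain ⟨hfp, u, hu, hlim⟩ := hf
  exact ⟨u, hu, tendstoLocallyUniformlyOn_of_tendsto_hpNorm hp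
    (fun k => hfp.sub (hS _ (hu k)) hp.le) hlim⟩

lemma eq_of_mem_hpClosure {S : Set (ℂ → ℂ)} {z w : ℂ} (hp : 0 < p) (hS : ∀ u ∈ S, MemHp p u)
    (hf : f ∈ hpClosure p S) (hz : z ∈ uDisk) (hw : w ∈ uDisk) (hzw : ∀ u ∈ S, u z = u w) :
    f z = f w := by
  obtain ⟨u, hu, hconv⟩ := exists_tendstoLocallyUniformlyOn_of_mem_hpClosure hp hS hf
  refine tendsto_nhds_unique (hconv.tendsto_at hz) ?_
  simpa only [hzw _ (hu _)] using hconv.tendsto_at hw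

lemma deriv_eq_zero_of_mem_hpClosure {S : Set (ℂ → ℂ)} {w : ℂ} (hp : 0 < p)
    (hS : ∀ u ∈ S, MemHp p u) (hf : f ∈ hpClosure p S) (hw : w ∈ uDisk)
    (hderiv : ∀ u ∈ S, deriv u w = 0) : deriv f w = 0 := by
  obtain ⟨u, hu, hconv⟩ := exists_tendstoLocallyUniformlyOn_of_mem_hpClosure hp hS hf
  have hlim := (hconv.deriv (Eventually.of_forall fun k => (hS _ (hu k)).1)
    isOpen_uDisk).tendsto_at hw
  refine tendsto_nhds_unique hlim ?_
  simpa only [Function.comp_apply, hderiv _ (hu _)] using tendsto_const_nhds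

section Separation

variable {J : ℂ → ℂ} {S : Set (ℂ → ℂ)} {w₀ : ℂ}

lemma exists_ne_of_mem_hpClosure {w : ℂ} (hp : 0 < p) (hS : ∀ u ∈ S, MemHp p u)
    (hJ : J ∈ hpClosure p S) (hzJ : (fun z => J z * z) ∈ hpClosure p S) (hw₀ : w₀ ∈ uDisk)
    (hJw₀ : J w₀ ≠ 0) (hw : w ∈ uDisk) (hne : w ≠ w₀) : ∃ u ∈ S, u w ≠ u w₀ := by
  by_contra! hcon
  have hJw : J w = J w₀ := eq_of_mem_hpClosure hp hS hJ hw hw₀ hcon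
  have hzJw : J w * w = J w₀ * w₀ := eq_of_mem_hpClosure hp hS hzJ hw hw₀ hcon
  rw [hJw] at hzJw
  exact hne (mul_left_cancel₀ hJw₀ hzJw)

lemma exists_deriv_ne_zero_of_mem_hpClosure (hp : 0 < p) (hS : ∀ u ∈ S, MemHp p u)
    (hJ : J ∈ hpClosure p S) (hzJ : (fun z => J z * z) ∈ hpClosure p S) (hw₀ : w₀ ∈ uDisk)
    (hJw₀ : J w₀ ≠ 0) : ∃ u ∈ S, deriv u w₀ ≠ 0 := by
  by_contra! hcon
  have hJ' : deriv J w₀ = 0 := deriv_eq_zero_of_mem_hpClosure hp hS hJ hw₀ hcon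
  have hzJ' : deriv (fun z => J z * z) w₀ = 0 :=
    deriv_eq_zero_of_mem_hpClosure hp hS hzJ hw₀ hcon
  have hJd : HasDerivAt J (deriv J w₀) w₀ :=
    (hJ.1.1.differentiableAt (isOpen_uDisk.mem_nhds hw₀)).hasDerivAt
  rw [(hJd.fun_mul (hasDerivAt_id' w₀)).deriv, hJ'] at hzJ'
  exact hJw₀ (by simpa using hzJ')

end Separation

end Hardy

/-! ### Algebras generated by bounded holomorphic functions -/

section Algebra

variable {s : Set (ℂ → ℂ)} {u : ℂ → ℂ}

lemma algGen_subset_adjoin_range {m : ℕ} (F : Fin m → ℂ → ℂ) :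
    algGen m F ⊆ Algebra.adjoin ℂ (range F) := by
  rintro u ⟨P, hP⟩
  rw [Algebra.adjoin_range_eq_range_aeval]
  refine ⟨P, funext fun z => ?_⟩
  rw [hP z]
  change Pi.evalAlgHom ℂ (fun _ : ℂ => ℂ) z (MvPolynomial.aeval F P) = _
  rw [MvPolynomial.comp_aeval_apply]
  rfl

lemma algGen2_subset_adjoin_pair (F G : ℂ → ℂ) : algGen2 F G ⊆ Algebra.adjoin ℂ {F, G} := by
  simpa only [algGen2, Matrix.range_cons, Matrix.range_empty, union_empty, singleton_union]
    using algGen_subset_adjoin_range ![F, G]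

lemma memHinf_of_mem_adjoin (hs : ∀ f ∈ s, MemHinf f) (hu : u ∈ Algebra.adjoin ℂ s) :
    MemHinf u := by
  induction hu using Algebra.adjoin_induction with
  | mem u hu => exact hs u hu
  | algebraMap c => exact ⟨differentiableOn_const c, ‖c‖, fun _ _ => le_rfl⟩
  | add u v _ _ hu hv =>
    obtain ⟨⟨hud, K, hK⟩, ⟨hvd, L, hL⟩⟩ := And.intro hu hv
    exact ⟨hud.add hvd, K + L, fun z hz => norm_add_le_of_le (hK z hz) (hL z hz)⟩
  | mul u v _ _ hu hv =>
    obtain ⟨⟨hud, K, hK⟩, ⟨hvd, L, hL⟩⟩ := And.intro hu hv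
    exact ⟨hud.mul hvd, K * L, fun z hz => norm_mul_le_of_le (hK z hz) (hL z hz)⟩

lemma eq_of_mem_adjoin {z w : ℂ} (hs : ∀ f ∈ s, f z = f w) (hu : u ∈ Algebra.adjoin ℂ s) :
    u z = u w := by
  induction hu using Algebra.adjoin_induction with
  | mem u hu => exact hs u hu
  | algebraMap c => rfl
  | add u v _ _ hu hv => simp only [Pi.add_apply, hu, hv]
  | mul u v _ _ hu hv => simp only [Pi.mul_apply, hu, hv]

lemma hasDerivAt_zero_of_mem_adjoin {w : ℂ} (hs : ∀ f ∈ s, HasDerivAt f 0 w)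
    (hu : u ∈ Algebra.adjoin ℂ s) : HasDerivAt u 0 w := by
  induction hu using Algebra.adjoin_induction with
  | mem u hu => exact hs u hu
  | algebraMap c => exact hasDerivAt_const w c
  | add u v _ _ hu hv => simpa using hu.add hv
  | mul u v _ _ hu hv => simpa using hu.mul hv

end Algebra

/-! ### Difference quotients along the fibers of a function -/

section Fiber

variable {𝕜 : Type*} [NontriviallyNormedField 𝕜] {F G : 𝕜 → 𝕜} {w₀ x : 𝕜} {F' G' : 𝕜}

lemma isBigO_sub_sub_of_hasStrictDerivAt (hF : HasStrictDerivAt F F' w₀)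
    (hG : HasStrictDerivAt G G' w₀) (hcrit : F' ≠ 0 ∨ G' ≠ 0) :
    (fun q : 𝕜 × 𝕜 => q.1 - q.2) =O[𝓝 (w₀, w₀) ⊓ 𝓟 {q | F q.1 = F q.2}]
      fun q => G q.1 - G q.2 := by
  rcases hcrit with hF' | hG'
  · refine ((hF.isTheta_sub hF').isBigO_symm.mono inf_le_left).trans (.of_bound 0 ?_)
    filter_upwards [mem_inf_of_right (mem_principal_self _)] with q (hq : F q.1 = F q.2)
    simp [hq]
  · exact (hG.isTheta_sub hG').isBigO_symm.mono inf_le_left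

lemma isBigO_sub_sub_of_ne (hGw₀ : ContinuousAt G w₀) (hGx : ContinuousAt G x)
    (hne : G w₀ ≠ G x) :
    (fun q : 𝕜 × 𝕜 => q.1 - q.2) =O[𝓝 (w₀, x)] fun q => G q.1 - G q.2 := by
  have hsub : Tendsto (fun q : 𝕜 × 𝕜 => q.1 - q.2) (𝓝 (w₀, x)) (𝓝 (w₀ - x)) :=
    (continuous_fst.sub continuous_snd).tendsto (w₀, x)
  have hGsub : Tendsto (fun q : 𝕜 × 𝕜 => G q.1 - G q.2) (𝓝 (w₀, x)) (𝓝 (G w₀ - G x)) :=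
    (hGw₀.tendsto.comp (continuous_fst.tendsto (w₀, x))).sub
      (hGx.tendsto.comp (continuous_snd.tendsto (w₀, x)))
  refine (hsub.isBigO_one 𝕜).trans ?_
  have hpos : 0 < ‖G w₀ - G x‖ := norm_pos_iff.2 (sub_ne_zero.2 hne)
  refine (Asymptotics.isBigO_const_left_iff_pos_le_norm one_ne_zero).2 ⟨_, half_pos hpos, ?_⟩
  filter_upwards [hGsub.norm.eventually (lt_mem_nhds (half_lt_self hpos))] with q hq using hq.le

lemma isBigO_prod_principal_of_isCompact {X Y E E' : Type*} [TopologicalSpace Y] [Norm E]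
    [SeminormedAddCommGroup E'] {f : X × Y → E} {h : X × Y → E'} {l : Filter X} {s : Set (X × Y)}
    {K : Set Y} (hK : IsCompact K) (hlocal : ∀ y ∈ K, f =O[l ×ˢ 𝓝 y ⊓ 𝓟 s] h) :
    f =O[l ×ˢ 𝓟 K ⊓ 𝓟 s] h := by
  refine hK.induction_on (p := fun t => f =O[l ×ˢ 𝓟 t ⊓ 𝓟 s] h) (by simp)
    (fun t t' htt' ht' => ht'.mono ?_) (fun t t' ht ht' => ?_) fun y hy => ?_
  · exact inf_le_inf_right _ (Filter.prod_mono le_rfl (principal_mono.2 htt'))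
  · simpa only [← sup_principal, prod_sup, inf_sup_right] using ht.sup ht'
  · obtain ⟨C, hC⟩ := (hlocal y hy).bound
    obtain ⟨u, hu, v, hv, huv⟩ := mem_prod_iff.1 (eventually_inf_principal.1 hC)
    refine ⟨v, mem_nhdsWithin_of_mem_nhds hv, .of_bound C (eventually_inf_principal.2 ?_)⟩
    exact mem_of_superset (prod_mem_prod hu (mem_principal_self v)) huv

lemma isBigO_sub_sub_of_isCompact {K : Set 𝕜} (hK : IsCompact K)
    (hFc : ∀ x ∈ K, ContinuousAt F x) (hGc : ∀ x ∈ K, F x = F w₀ → ContinuousAt G x)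
    (hF : HasStrictDerivAt F F' w₀) (hG : HasStrictDerivAt G G' w₀) (hcrit : F' ≠ 0 ∨ G' ≠ 0)
    (hsep : ∀ x ∈ K, x ≠ w₀ → F x = F w₀ → G x ≠ G w₀) :
    (fun q : 𝕜 × 𝕜 => q.1 - q.2) =O[𝓝 w₀ ×ˢ 𝓟 K ⊓ 𝓟 {q | F q.1 = F q.2}]
      fun q => G q.1 - G q.2 := by
  refine isBigO_prod_principal_of_isCompact hK fun x hx => ?_
  rw [← nhds_prod_eq]
  by_cases hFx : F x = F w₀
  · rcases eq_or_ne x w₀ with rfl | hne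
    · exact isBigO_sub_sub_of_hasStrictDerivAt hF hG hcrit
    · exact (isBigO_sub_sub_of_ne hG.hasDerivAt.continuousAt (hGc x hx hFx)
        (hsep x hx hne hFx).symm).mono inf_le_left
  · have hFF : Tendsto (fun q : 𝕜 × 𝕜 => (F q.1, F q.2)) (𝓝 (w₀, x)) (𝓝 (F w₀, F x)) :=
      (hF.hasDerivAt.continuousAt.tendsto.comp (continuous_fst.tendsto (w₀, x))).prodMk_nhds
        ((hFc x hx).tendsto.comp (continuous_snd.tendsto (w₀, x)))
    have hbot : 𝓝 (w₀, x) ⊓ 𝓟 {q | F q.1 = F q.2} = ⊥ := by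
      rw [inf_principal_eq_bot]
      exact hFF.eventually (isOpen_ne_fun continuous_fst continuous_snd |>.mem_nhds (Ne.symm hFx))
    rw [hbot]
    exact Asymptotics.isBigO_bot _ _

end Fiber

lemma eventually_deriv_ne_zero_of_exists_ne {f : ℂ → ℂ} {U : Set ℂ} {w₀ : ℂ}
    (hU : IsOpen U) (hUc : IsPreconnected U) (hf : DifferentiableOn ℂ f U) (hw₀ : w₀ ∈ U)
    (hconst : ∃ z ∈ U, f z ≠ f w₀) : ∀ᶠ z in 𝓝[≠] w₀, deriv f z ≠ 0 := by
  have hderiv : AnalyticOnNhd ℂ (deriv f) U := (hf.analyticOnNhd hU).deriv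
  refine (hderiv w₀ hw₀).eventually_eq_zero_or_eventually_ne_zero.resolve_left fun hzero => ?_
  obtain ⟨z, hz, hne⟩ := hconst
  exact hne (hU.is_const_of_deriv_eq_zero hUc hf
    (hderiv.eqOn_zero_of_preconnected_of_eventuallyEq_zero hUc hw₀ hzero) hz hw₀)

lemma norm_prod_map_le_pow_card_mul {ι 𝕜 : Type*} [NormedField 𝕜] {s : Multiset ι} {f h : ι → 𝕜}
    {C : ℝ} (hfh : ∀ i ∈ s, ‖f i‖ ≤ C * ‖h i‖) :
    ‖(s.map f).prod‖ ≤ C ^ Multiset.card s * ‖(s.map h).prod‖ := by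
  have hnorm (t : Multiset 𝕜) : ‖t.prod‖ = (t.map norm).prod := map_multiset_prod normHom t
  calc ‖(s.map f).prod‖ = (s.map fun i => ‖f i‖).prod := by simp [hnorm]
    _ ≤ (s.map fun i => C * ‖h i‖).prod :=
        Multiset.prod_map_le_prod_map₀ _ _ (fun _ _ => norm_nonneg _) hfh
    _ = C ^ Multiset.card s * ‖(s.map h).prod‖ := by simp [hnorm, Multiset.prod_map_mul]

/-! ### Fibers of a finite Blaschke product -/

lemma norm_sq_one_sub_conj_mul_sub_norm_sq_sub (α z : ℂ) :
    ‖1 - (starRingEnd ℂ) α * z‖ ^ 2 - ‖α - z‖ ^ 2 = (1 - ‖α‖ ^ 2) * (1 - ‖z‖ ^ 2) := by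
  simp only [Complex.sq_norm, Complex.normSq_apply, sub_re, one_re, mul_re, conj_re, conj_im,
    sub_im, one_im, mul_im]
  ring

lemma norm_sub_lt_norm_one_sub_conj_mul {α z : ℂ} (hα : ‖α‖ < 1) (hz : ‖z‖ < 1) :
    ‖α - z‖ < ‖1 - (starRingEnd ℂ) α * z‖ := by
  have h := norm_sq_one_sub_conj_mul_sub_norm_sq_sub α z
  have hpos : 0 < (1 - ‖α‖ ^ 2) * (1 - ‖z‖ ^ 2) :=
    mul_pos (by simpa using hα) (by simpa using hz)
  exact (sq_lt_sq₀ (norm_nonneg _) (norm_nonneg _)).1 (by linarith)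

lemma norm_one_sub_conj_mul_le_norm_sub {α z : ℂ} (hα : ‖α‖ ≤ 1) (hz : 1 ≤ ‖z‖) :
    ‖1 - (starRingEnd ℂ) α * z‖ ≤ ‖α - z‖ := by
  have h := norm_sq_one_sub_conj_mul_sub_norm_sq_sub α z
  have hnonpos : (1 - ‖α‖ ^ 2) * (1 - ‖z‖ ^ 2) ≤ 0 :=
    mul_nonpos_of_nonneg_of_nonpos (by simpa using hα) (by simpa using hz)
  exact (sq_le_sq₀ (norm_nonneg _) (norm_nonneg _)).1 (by linarith)

lemma one_sub_conj_mul_ne_zero {α z : ℂ} (hα : ‖α‖ < 1) (hz : ‖z‖ ≤ 1) :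
    1 - (starRingEnd ℂ) α * z ≠ 0 := by
  refine sub_ne_zero.2 fun h => ?_
  have hnorm : ‖α‖ * ‖z‖ = 1 := by simpa using (congrArg norm h).symm
  exact (mul_lt_one_of_nonneg_of_lt_one_left (norm_nonneg _) hα hz).ne hnorm

section Blaschke

variable {n : ℕ} {a : Fin n → ℂ} {z w : ℂ}

lemma prod_one_sub_conj_mul_ne_zero (ha : ∀ j, a j ∈ uDisk) (hz : z ∈ cDisk) :
    ∏ j, (1 - (starRingEnd ℂ) (a j) * z) ≠ 0 :=
  Finset.prod_ne_zero_iff.2 fun j _ =>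
    one_sub_conj_mul_ne_zero (mem_ball_zero_iff.1 (ha j)) (mem_closedBall_zero_iff.1 hz)

lemma differentiableAt_blaschke (ha : ∀ j, a j ∈ uDisk) (hz : z ∈ cDisk) :
    DifferentiableAt ℂ (blaschke a) z := by
  unfold blaschke
  refine DifferentiableAt.fun_finsetProd fun j _ => .div (by fun_prop) (by fun_prop) ?_
  exact one_sub_conj_mul_ne_zero (mem_ball_zero_iff.1 (ha j)) (mem_closedBall_zero_iff.1 hz)

lemma differentiableOn_blaschke (ha : ∀ j, a j ∈ uDisk) : DifferentiableOn ℂ (blaschke a) uDisk :=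
  fun _ hz => (differentiableAt_blaschke ha (ball_subset_closedBall hz)).differentiableWithinAt

lemma norm_blaschke_lt_one (hn : n ≠ 0) (ha : ∀ j, a j ∈ uDisk) (hz : z ∈ uDisk) :
    ‖blaschke a z‖ < 1 := by
  have hfactor (j : Fin n) : ‖(a j - z) / (1 - (starRingEnd ℂ) (a j) * z)‖ < 1 := by
    have hlt := norm_sub_lt_norm_one_sub_conj_mul (mem_ball_zero_iff.1 (ha j))
      (mem_ball_zero_iff.1 hz)
    rw [norm_div]
    exact (div_lt_one ((norm_nonneg _).trans_lt hlt)).2 hlt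
  rw [blaschke, norm_prod,
    ← Finset.mul_prod_erase _ _ (Finset.mem_univ ⟨0, Nat.pos_of_ne_zero hn⟩)]
  exact mul_lt_one_of_nonneg_of_lt_one_left (norm_nonneg _) (hfactor _)
    (Finset.prod_le_one (fun _ _ => norm_nonneg _) fun j _ => (hfactor j).le)

lemma memHinf_blaschke (hn : n ≠ 0) (ha : ∀ j, a j ∈ uDisk) : MemHinf (blaschke a) :=
  ⟨differentiableOn_blaschke ha, 1, fun _ hz => (norm_blaschke_lt_one hn ha hz).le⟩

/-- The polynomial `N - B(z)·D`, where `B = N / D`, whose roots form the multiset `fiberMS a z`. -/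
def fiberPoly (a : Fin n → ℂ) (z : ℂ) : ℂ[X] :=
  (∏ j, (C (a j) - X)) - C (blaschke a z) * ∏ j, (1 - C ((starRingEnd ℂ) (a j)) * X)

lemma fiberMS_eq_roots_fiberPoly (a : Fin n → ℂ) (z : ℂ) : fiberMS a z = (fiberPoly a z).roots :=
  rfl

lemma eval_fiberPoly (a : Fin n → ℂ) (z w : ℂ) : (fiberPoly a z).eval w =
    ∏ j, (a j - w) - blaschke a z * ∏ j, (1 - (starRingEnd ℂ) (a j) * w) := by
  simp [fiberPoly, eval_prod]

lemma eval_fiberPoly_eq_mul_blaschke_sub (ha : ∀ j, a j ∈ uDisk) (z : ℂ) (hw : w ∈ cDisk) :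
    (fiberPoly a z).eval w =
      (∏ j, (1 - (starRingEnd ℂ) (a j) * w)) * (blaschke a w - blaschke a z) := by
  have hquot : (∏ j, (1 - (starRingEnd ℂ) (a j) * w)) * blaschke a w = ∏ j, (a j - w) := by
    rw [blaschke, Finset.prod_div_distrib, mul_div_cancel₀ _ (prod_one_sub_conj_mul_ne_zero ha hw)]
  rw [eval_fiberPoly, mul_sub, hquot, mul_comm (blaschke a z)]

lemma isRoot_fiberPoly_iff (ha : ∀ j, a j ∈ uDisk) (hw : w ∈ cDisk) :
    (fiberPoly a z).IsRoot w ↔ blaschke a w = blaschke a z := by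
  rw [IsRoot.def, eval_fiberPoly_eq_mul_blaschke_sub ha z hw, mul_eq_zero, sub_eq_zero,
    or_iff_right (prod_one_sub_conj_mul_ne_zero ha hw)]

lemma mem_uDisk_of_isRoot_fiberPoly (hn : n ≠ 0) (ha : ∀ j, a j ∈ uDisk) (hz : z ∈ uDisk)
    (hw : (fiberPoly a z).IsRoot w) : w ∈ uDisk := by
  by_contra hwU
  have hw1 : 1 ≤ ‖w‖ := by simpa [uDisk] using hwU
  have hle : ∏ j, ‖1 - (starRingEnd ℂ) (a j) * w‖ ≤ ∏ j, ‖a j - w‖ :=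
    Finset.prod_le_prod (fun _ _ => norm_nonneg _) fun j _ =>
      norm_one_sub_conj_mul_le_norm_sub (mem_ball_zero_iff.1 (ha j)).le hw1
  have hpos : 0 < ∏ j, ‖a j - w‖ := Finset.prod_pos fun j _ =>
    norm_pos_iff.2 (sub_ne_zero.2 fun haw => hwU (haw ▸ ha j))
  have heq : ∏ j, ‖a j - w‖ = ‖blaschke a z‖ * ∏ j, ‖1 - (starRingEnd ℂ) (a j) * w‖ := by
    rw [IsRoot.def, eval_fiberPoly, sub_eq_zero] at hw
    simpa only [norm_mul, norm_prod] using congrArg norm hw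
  exact heq.not_gt <|
    (mul_le_mul_of_nonneg_left hle (norm_nonneg _)).trans_lt
      (mul_lt_of_lt_one_left hpos (norm_blaschke_lt_one hn ha hz))

lemma mem_uDisk_of_blaschke_eq (hn : n ≠ 0) (ha : ∀ j, a j ∈ uDisk) (hz : z ∈ uDisk)
    (hw : w ∈ cDisk) (hB : blaschke a w = blaschke a z) : w ∈ uDisk :=
  mem_uDisk_of_isRoot_fiberPoly hn ha hz ((isRoot_fiberPoly_iff ha hw).2 hB)

lemma fiberPoly_ne_zero (hn : n ≠ 0) (ha : ∀ j, a j ∈ uDisk) (hz : z ∈ uDisk) :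
    fiberPoly a z ≠ 0 := by
  intro hzero
  have hone : (1 : ℂ) ∈ uDisk := mem_uDisk_of_isRoot_fiberPoly hn ha hz (by simp [hzero])
  simp [uDisk] at hone

lemma mem_uDisk_and_blaschke_eq_of_mem_fiberMS (hn : n ≠ 0) (ha : ∀ j, a j ∈ uDisk)
    (hz : z ∈ uDisk) (hw : w ∈ fiberMS a z) : w ∈ uDisk ∧ blaschke a w = blaschke a z := by
  have hroot : (fiberPoly a z).IsRoot w := isRoot_of_mem_roots hw
  have hwU := mem_uDisk_of_isRoot_fiberPoly hn ha hz hroot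
  exact ⟨hwU, (isRoot_fiberPoly_iff ha (ball_subset_closedBall hwU)).1 hroot⟩

lemma natDegree_fiberPoly_le (a : Fin n → ℂ) (z : ℂ) : (fiberPoly a z).natDegree ≤ n := by
  have hprod (q : Fin n → ℂ[X]) (hq : ∀ j, (q j).natDegree ≤ 1) : (∏ j, q j).natDegree ≤ n :=
    (natDegree_prod_le _ _).trans <|
      (Finset.sum_le_card_nsmul _ _ 1 fun j _ => hq j).trans (by simp)
  refine (natDegree_sub_le _ _).trans (max_le (hprod _ fun j => ?_)
    ((natDegree_C_mul_le _ _).trans (hprod _ fun j => ?_)))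
  · compute_degree
  · compute_degree

lemma card_fiberMS_le (a : Fin n → ℂ) (z : ℂ) : Multiset.card (fiberMS a z) ≤ n :=
  (card_roots' _).trans (natDegree_fiberPoly_le a z)

lemma eval_derivative_fiberPoly_self (ha : ∀ j, a j ∈ uDisk) (hz : z ∈ uDisk) :
    (fiberPoly a z).derivative.eval z =
      (∏ j, (1 - (starRingEnd ℂ) (a j) * z)) * deriv (blaschke a) z := by
  have hden : DifferentiableAt ℂ (fun w => ∏ j, (1 - (starRingEnd ℂ) (a j) * w)) z := by fun_prop
  have hB := differentiableAt_blaschke ha (ball_subset_closedBall hz)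
  have heq : (fun w => (fiberPoly a z).eval w) =ᶠ[𝓝 z]
      fun w => (∏ j, (1 - (starRingEnd ℂ) (a j) * w)) * (blaschke a w - blaschke a z) := by
    filter_upwards [isOpen_uDisk.mem_nhds hz] with w hw
    exact eval_fiberPoly_eq_mul_blaschke_sub ha z (ball_subset_closedBall hw)
  rw [← Polynomial.deriv, heq.deriv_eq, deriv_fun_mul hden (hB.sub_const _), deriv_sub_const]
  simp

lemma exists_blaschke_ne (hn : n ≠ 0) (ha : ∀ j, a j ∈ uDisk) (hz : z ∈ uDisk) :
    ∃ w ∈ uDisk, blaschke a w ≠ blaschke a z := by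
  by_contra! hconst
  refine fiberPoly_ne_zero hn ha hz (eq_zero_of_infinite_isRoot _ ?_)
  exact (infinite_of_mem_nhds z (isOpen_uDisk.mem_nhds hz)).mono fun w hw =>
    (isRoot_fiberPoly_iff ha (ball_subset_closedBall hw)).2 (hconst w hw)

lemma eventually_deriv_blaschke_ne_zero (hn : n ≠ 0) (ha : ∀ j, a j ∈ uDisk) (hz : z ∈ uDisk) :
    ∀ᶠ w in 𝓝[≠] z, deriv (blaschke a) w ≠ 0 :=
  eventually_deriv_ne_zero_of_exists_ne isOpen_uDisk (convex_ball 0 1).isPreconnected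
    (differentiableOn_blaschke ha) hz (exists_blaschke_ne hn ha hz)

lemma calD_id_ne_zero (hn : n ≠ 0) (ha : ∀ j, a j ∈ uDisk) (hz : z ∈ uDisk)
    (hderiv : deriv (blaschke a) z ≠ 0) : calD a id z ≠ 0 := by
  have hsimple : ¬ 1 < Multiset.count z (fiberMS a z) := by
    rw [fiberMS_eq_roots_fiberPoly, count_roots,
      one_lt_rootMultiplicity_iff_isRoot (fiberPoly_ne_zero hn ha hz)]
    rintro ⟨-, hroot⟩
    rw [IsRoot.def, eval_derivative_fiberPoly_self ha hz] at hroot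
    exact mul_ne_zero (prod_one_sub_conj_mul_ne_zero ha (ball_subset_closedBall hz)) hderiv hroot
  have hnotMem : z ∉ (fiberMS a z).erase z := by
    rw [← Multiset.one_le_count_iff_mem, Multiset.count_erase_self]
    omega
  simpa [calD, Multiset.prod_eq_zero_iff, sub_eq_zero] using hnotMem

variable {g Γg : ℂ → ℂ} {w₀ : ℂ}

lemma exists_eventually_norm_sub_le_of_blaschke_eq (hn : n ≠ 0) (ha : ∀ j, a j ∈ uDisk)
    (hg : DifferentiableOn ℂ g uDisk) (hw₀ : w₀ ∈ uDisk)
    (hcrit : deriv (blaschke a) w₀ ≠ 0 ∨ deriv g w₀ ≠ 0)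
    (hsep : ∀ w ∈ uDisk, w ≠ w₀ → blaschke a w = blaschke a w₀ → g w ≠ g w₀) :
    ∃ M, ∀ᶠ z in 𝓝 w₀, ∀ w ∈ cDisk, blaschke a z = blaschke a w → ‖z - w‖ ≤ M * ‖g z - g w‖ := by
  have hstrict {f : ℂ → ℂ} (hf : DifferentiableOn ℂ f uDisk) :
      HasStrictDerivAt f (deriv f w₀) w₀ :=
    (hf.analyticAt (isOpen_uDisk.mem_nhds hw₀)).hasStrictDerivAt
  have hfiber {w : ℂ} (hw : w ∈ cDisk) (hB : blaschke a w = blaschke a w₀) : w ∈ uDisk :=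
    mem_uDisk_of_blaschke_eq hn ha hw₀ hw hB
  obtain ⟨M, hM⟩ := (isBigO_sub_sub_of_isCompact (isCompact_closedBall 0 1)
    (fun w hw => (differentiableAt_blaschke ha hw).continuousAt)
    (fun w hw hB => hg.continuousOn.continuousAt (isOpen_uDisk.mem_nhds (hfiber hw hB)))
    (hstrict (differentiableOn_blaschke ha)) (hstrict hg) hcrit
    fun w hw hne hB => hsep w (hfiber hw hB) hne hB).bound
  rw [eventually_inf_principal, eventually_prod_principal_iff] at hM
  exact ⟨M, hM⟩

lemma isBigO_calD_id (hn : n ≠ 0) (ha : ∀ j, a j ∈ uDisk)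
    (hg : DifferentiableOn ℂ g uDisk) (hw₀ : w₀ ∈ uDisk)
    (hcrit : deriv (blaschke a) w₀ ≠ 0 ∨ deriv g w₀ ≠ 0)
    (hsep : ∀ w ∈ uDisk, w ≠ w₀ → blaschke a w = blaschke a w₀ → g w ≠ g w₀) :
    calD a id =O[𝓝 w₀] calD a g := by
  obtain ⟨M, hM⟩ := exists_eventually_norm_sub_le_of_blaschke_eq hn ha hg hw₀ hcrit hsep
  refine .of_bound (max M 1 ^ n) ?_
  filter_upwards [hM, isOpen_uDisk.mem_nhds hw₀] with z hzM hz
  have hcard : Multiset.card ((fiberMS a z).erase z) ≤ n :=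
    (Multiset.card_le_card (Multiset.erase_le _ _)).trans (card_fiberMS_le a z)
  calc ‖calD a id z‖ ≤ max M 1 ^ Multiset.card ((fiberMS a z).erase z) * ‖calD a g z‖ := by
        refine norm_prod_map_le_pow_card_mul fun w hw => ?_
        obtain ⟨hwU, hB⟩ :=
          mem_uDisk_and_blaschke_eq_of_mem_fiberMS hn ha hz (Multiset.mem_of_mem_erase hw)
        exact (hzM w (ball_subset_closedBall hwU) hB.symm).trans
          (mul_le_mul_of_nonneg_right (le_max_left M 1) (norm_nonneg _))
    _ ≤ max M 1 ^ n * ‖calD a g z‖ := by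
        gcongr
        exact le_max_right M 1

lemma IsGamma.ne_zero (hΓg : IsGamma a g Γg) (hn : n ≠ 0) (ha : ∀ j, a j ∈ uDisk)
    (hg : DifferentiableOn ℂ g uDisk) (hw₀ : w₀ ∈ uDisk)
    (hcrit : deriv (blaschke a) w₀ ≠ 0 ∨ deriv g w₀ ≠ 0)
    (hsep : ∀ w ∈ uDisk, w ≠ w₀ → blaschke a w = blaschke a w₀ → g w ≠ g w₀) : Γg w₀ ≠ 0 := by
  obtain ⟨hΓd, hΓeq⟩ := hΓg
  have hU : ∀ᶠ z in 𝓝[≠] w₀, z ∈ uDisk := mem_nhdsWithin_of_mem_nhds (isOpen_uDisk.mem_nhds hw₀)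
  obtain ⟨M, hM⟩ := (isBigO_calD_id hn ha hg hw₀ hcrit hsep).bound
  have hlower : ∀ᶠ z in 𝓝[≠] w₀, 1 ≤ M * ‖Γg z‖ := by
    filter_upwards [hU, hM.filter_mono nhdsWithin_le_nhds,
      eventually_deriv_blaschke_ne_zero hn ha hw₀] with z hz hzM hderiv
    rw [← hΓeq z hz, norm_mul, ← mul_assoc] at hzM
    exact (le_mul_iff_one_le_left (norm_pos_iff.2 (calD_id_ne_zero hn ha hz hderiv))).1 hzM
  have hlim : Tendsto (fun z => M * ‖Γg z‖) (𝓝[≠] w₀) (𝓝 (M * ‖Γg w₀‖)) :=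
    ((hΓd.continuousOn.continuousAt (isOpen_uDisk.mem_nhds hw₀)).norm.const_mul M).tendsto.mono_left
      nhdsWithin_le_nhds
  intro hzero
  have hle := ge_of_tendsto hlim hlower
  norm_num [hzero] at hle

end Blaschke

theorem stmt16_general {n : ℕ} (hn : n ≠ 0) (a : Fin n → ℂ) (ha : ∀ j, a j ∈ uDisk)
    (g Γg : ℂ → ℂ) (hg : MemHinf g) (hΓg : IsGamma a g Γg) (p : ℝ) (hp : 0 < p) (J : ℂ → ℂ)
    (hJ : J ∈ hpClosure p (algGen2 (blaschke a) g))
    (hzJ : (fun z => J z * z) ∈ hpClosure p (algGen2 (blaschke a) g))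
    (w₀ : ℂ) (hw₀ : w₀ ∈ uDisk) (hΓ0 : Γg w₀ = 0) : J w₀ = 0 := by
  by_contra hJw₀
  have hB := memHinf_blaschke hn ha
  have hS (u) (hu : u ∈ algGen2 (blaschke a) g) : MemHp p u :=
    (memHinf_of_mem_adjoin (by simp [hB, hg]) (algGen2_subset_adjoin_pair _ _ hu)).memHp hp.le
  have hsep (w) (hw : w ∈ uDisk) (hne : w ≠ w₀) (hBw : blaschke a w = blaschke a w₀) :
      g w ≠ g w₀ := by
    intro hgw
    obtain ⟨u, hu, huw⟩ := exists_ne_of_mem_hpClosure hp hS hJ hzJ hw₀ hJw₀ hw hne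
    exact huw (eq_of_mem_adjoin (by simp [hBw, hgw]) (algGen2_subset_adjoin_pair _ _ hu))
  have hcrit : deriv (blaschke a) w₀ ≠ 0 ∨ deriv g w₀ ≠ 0 := by
    by_contra! hcon
    obtain ⟨u, hu, huw₀⟩ := exists_deriv_ne_zero_of_mem_hpClosure hp hS hJ hzJ hw₀ hJw₀
    have hasDeriv {f : ℂ → ℂ} (hf : MemHinf f) (hf' : deriv f w₀ = 0) : HasDerivAt f 0 w₀ :=
      hf' ▸ (hf.1.differentiableAt (isOpen_uDisk.mem_nhds hw₀)).hasDerivAt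
    exact huw₀ (hasDerivAt_zero_of_mem_adjoin (by simp [hasDeriv hB hcon.1, hasDeriv hg hcon.2])
      (algGen2_subset_adjoin_pair _ _ hu)).deriv
  exact hΓg.ne_zero hn ha hg.1 hw₀ hcrit hsep hΓ0

/-- If `J` is inner and `J·H^p` is contained in the `H^p`-closure of
`ℂ[B,g]`, then `J` vanishes at every zero of `Γ(g)` in the disk. -/
theorem stmt16 {n : ℕ} (hn : 2 ≤ n) (a : Fin n → ℂ) (ha : ∀ j, a j ∈ uDisk)
    (ha0 : a ⟨0, by omega⟩ = 0)
    (g Γg : ℂ → ℂ) (hg : MemHinf g) (hΓg : IsGamma a g Γg)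
    (p : ℝ) (hp : 0 < p)
    (J : ℂ → ℂ) (hJ : IsInner J)
    (hJH : ∀ h : ℂ → ℂ, MemHp p h →
      (fun z => J z * h z) ∈ hpClosure p (algGen2 (blaschke a) g))
    (w₀ : ℂ) (hw₀ : w₀ ∈ uDisk) (hΓ0 : Γg w₀ = 0) :
    J w₀ = 0 := by
  have hone : MemHinf fun _ => 1 := ⟨differentiableOn_const 1, 1, by simp⟩
  have hid : MemHinf fun z => z := ⟨differentiableOn_id, 1, fun z hz => (mem_ball_zero_iff.1 hz).le⟩
  exact stmt16_general (by omega) a ha g Γg hg hΓg p hp J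
    (by simpa using hJH _ (hone.memHp hp.le)) (hJH _ (hid.memHp hp.le)) w₀ hw₀ hΓ0
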